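/- Let n ≥ 1, s ∈ (0,1), and let u : ℝⁿ → ℝ be a Schwartz function. Set B_{n,s} := (∫_{ℝⁿ} (1 + |ξ|²)^{−(n+2s)/2} dξ)^{-1} and, for x ∈ ℝⁿ and y > 0, define the Poisson kernel P(x,y) := B_{n,s} · y^{2s} / (|x|² + y²)^{(n+2s)/2} and the extension v(x,y) := ∫_{ℝⁿ} P(x−ξ, y) u(ξ) dξ. Then for every x ∈ ℝⁿ, lim_{y→0⁺} (v(x,y) − u(x))/y^{2s} = B_{n,s} · lim_{ε→0⁺} ∫_{{ξ : |ξ−x| > ε}} (u(ξ) − u(x))/|x−ξ|^{n+2s} dξ, and in particular the principal value limit on the right-hand side exists. (Thus the normal-derivative trace of the Caffarelli–Silvestre extension recovers, up to a constant, the fractional Laplacian of u.) -/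

import Mathlib

open MeasureTheory Filter Metric Set
open scoped Topology

/-- The normalization constant of the Caffarelli–Silvestre Poisson kernel:
`B_{n,s} := (∫_{ℝⁿ} (1 + |ξ|²)^{−(n+2s)/2} dξ)⁻¹`. -/
noncomputable def poissonB (n : ℕ) (s : ℝ) : ℝ :=
  (∫ ξ : EuclideanSpace ℝ (Fin n), (1 + ‖ξ‖ ^ 2) ^ (-(((n : ℝ) + 2 * s) / 2)))⁻¹


section Helpers

/-- The symmetrized increment. -/
noncomputable def csD {n : ℕ} (u : SchwartzMap (EuclideanSpace ℝ (Fin n)) ℝ)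
    (x z : EuclideanSpace ℝ (Fin n)) : ℝ := (u (x + z) + u (x - z) - 2 * u x) / 2

lemma csD_bound_sq {n : ℕ} (u : SchwartzMap (EuclideanSpace ℝ (Fin n)) ℝ)
    (x : EuclideanSpace ℝ (Fin n)) :
    ∃ C : ℝ, 0 ≤ C ∧ ∀ z, |csD u x z| ≤ C * ‖z‖ ^ 2 := by
  obtain ⟨C, hC, h⟩ := u.decay 0 2
  have hd : Differentiable ℝ (fderiv ℝ u) := by
    have : ContDiff ℝ 1 (fderiv ℝ u) := (u.smooth 2).fderiv_right (by norm_num)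
    exact this.differentiable (by norm_num)
  have hL : ∀ a b, ‖fderiv ℝ u b - fderiv ℝ u a‖ ≤ C * ‖b - a‖ := by
    intro a b
    refine Convex.norm_image_sub_le_of_norm_fderiv_le (𝕜 := ℝ) (s := Set.univ)
      (fun z _ => hd z) (fun z _ => ?_) convex_univ (mem_univ _) (mem_univ _)
    have := h z
    rw [pow_zero, one_mul, ← norm_iteratedFDeriv_fderiv, norm_iteratedFDeriv_one] at this
    exact this
  refine ⟨C, hC.le, fun z => ?_⟩
  have hder : ∀ w, HasFDerivAt (fun w => u (x + w) + u (x - w))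
      (fderiv ℝ u (x + w) - fderiv ℝ u (x - w)) w := by
    intro w
    have h1 : HasFDerivAt (fun w => u (x + w)) (fderiv ℝ u (x + w)) w := by
      have := (u.differentiableAt (x := x + w)).hasFDerivAt.comp w
        ((hasFDerivAt_id w).const_add x)
      convert! this using 1
    have h2 : HasFDerivAt (fun w => u (x - w)) (-fderiv ℝ u (x - w)) w := by
      have := (u.differentiableAt (x := x - w)).hasFDerivAt.comp w
        ((hasFDerivAt_id w).const_sub x)
      convert! this using 1
      ext; simp
    rw [sub_eq_add_neg]
    exact h1.add h2
  have key := Convex.norm_image_sub_le_of_norm_hasFDerivWithin_le (𝕜 := ℝ)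
    (f := fun w => u (x + w) + u (x - w)) (C := C * (2 * ‖z‖))
    (s := Metric.closedBall 0 ‖z‖) (x := 0) (y := z)
    (fun w _ => (hder w).hasFDerivWithinAt) (fun w hw => ?_)
    (convex_closedBall _ _) (by simp) (by simp)
  · simp only [add_zero, sub_zero, Real.norm_eq_abs] at key
    unfold csD
    rw [abs_div, abs_two, div_le_iff₀ two_pos]
    calc _ = |u (x + z) + u (x - z) - (u x + u x)| := by ring_nf
      _ ≤ _ := key
      _ = _ := by ring
  · refine (hL _ _).trans ?_
    have hw' : ‖w‖ ≤ ‖z‖ := by simpa using hw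
    have : x + w - (x - w) = (2:ℝ) • w := by rw [two_smul]; abel
    rw [this, norm_smul, Real.norm_two]
    gcongr

lemma csD_bound {n : ℕ} (u : SchwartzMap (EuclideanSpace ℝ (Fin n)) ℝ)
    (x : EuclideanSpace ℝ (Fin n)) :
    ∃ C : ℝ, 0 ≤ C ∧ ∀ z, |csD u x z| ≤ C * min 1 (‖z‖ ^ 2) := by
  obtain ⟨C, hC, h⟩ := csD_bound_sq u x
  set M := SchwartzMap.seminorm ℝ 0 0 u
  have hM : ∀ z, |u z| ≤ M := fun z => SchwartzMap.norm_le_seminorm ℝ u z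
  have hM0 : 0 ≤ M := (abs_nonneg _).trans (hM 0)
  refine ⟨C + 2 * M, by positivity, fun z => ?_⟩
  rcases le_total 1 (‖z‖ ^ 2) with h1 | h1
  · rw [min_eq_left h1]
    have a := abs_le.1 (hM (x + z))
    have b := abs_le.1 (hM (x - z))
    have c := abs_le.1 (hM x)
    unfold csD
    rw [abs_le]; constructor <;> linarith
  · rw [min_eq_right h1]
    refine (h z).trans ?_
    gcongr; linarith

lemma cs_weight_integrable {n : ℕ} (hn : 1 ≤ n) {s : ℝ} (hs : s ∈ Set.Ioo (0:ℝ) 1) :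
    Integrable (fun z : EuclideanSpace ℝ (Fin n) =>
      min 1 (‖z‖ ^ 2) * ‖z‖ ^ (-((n : ℝ) + 2 * s))) := by
  have : Nonempty (Fin n) := ⟨⟨0, hn⟩⟩
  have : Nontrivial (EuclideanSpace ℝ (Fin n)) := inferInstance
  rw [integrable_fun_norm_addHaar (μ := volume)
    (f := fun r : ℝ => min 1 (r ^ 2) * r ^ (-((n : ℝ) + 2 * s)))]
  rw [finrank_euclideanSpace_fin, ← Ioc_union_Ioi_eq_Ioi (zero_le_one' ℝ)]
  have e : ∀ r : ℝ, 0 < r → r ^ (n - 1) = r ^ ((n:ℝ) - 1) := by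
    intro r hr
    rw [← Real.rpow_natCast, Nat.cast_sub hn, Nat.cast_one]
  refine IntegrableOn.union ?_ ?_
  · have : IntegrableOn (fun r : ℝ => r ^ (1 - 2 * s)) (Ioc 0 1) := by
      rw [← intervalIntegrable_iff_integrableOn_Ioc_of_le zero_le_one]
      exact intervalIntegral.intervalIntegrable_rpow' (by linarith [hs.2])
    refine this.congr_fun (fun r hr => ?_) measurableSet_Ioc
    have h0 : 0 < r := hr.1
    simp only [smul_eq_mul]
    rw [min_eq_right (by nlinarith [hr.2]), e r h0, ← Real.rpow_natCast r 2,
      ← Real.rpow_add h0, ← Real.rpow_add h0]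
    congr 1; push_cast; ring
  · have : IntegrableOn (fun r : ℝ => r ^ (-1 - 2 * s)) (Ioi 1) :=
      integrableOn_Ioi_rpow_of_lt (by linarith [hs.1]) one_pos
    refine this.congr_fun (fun r hr => ?_) measurableSet_Ioi
    have h1 : 1 < r := hr
    have h0 : 0 < r := by linarith
    simp only [smul_eq_mul]
    rw [min_eq_left (by nlinarith), e r h0, one_mul, ← Real.rpow_add h0]
    congr 1; ring

lemma cs_continuous_D {n : ℕ} (u : SchwartzMap (EuclideanSpace ℝ (Fin n)) ℝ)
    (x : EuclideanSpace ℝ (Fin n)) : Continuous (csD u x) := by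
  have := u.continuous
  unfold csD
  fun_prop

lemma cs_int_mul {n : ℕ} (u : SchwartzMap (EuclideanSpace ℝ (Fin n)) ℝ)
    (x : EuclideanSpace ℝ (Fin n)) (w : EuclideanSpace ℝ (Fin n) → ℝ) (hw : Integrable w) :
    Integrable (fun z => u (x + z) * w z) := by
  refine hw.bdd_mul (c := SchwartzMap.seminorm ℝ 0 0 u) ?_ ?_
  · have := u.continuous
    exact Continuous.aestronglyMeasurable (by fun_prop)
  · exact Eventually.of_forall fun z => SchwartzMap.norm_le_seminorm ℝ u _

lemma cs_symm {n : ℕ} (u : SchwartzMap (EuclideanSpace ℝ (Fin n)) ℝ)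
    (x : EuclideanSpace ℝ (Fin n)) (w : EuclideanSpace ℝ (Fin n) → ℝ) (hw : Integrable w)
    (he : ∀ z, w (-z) = w z) :
    ∫ ξ, (u ξ - u x) * w (ξ - x) = ∫ z, csD u x z * w z := by
  rw [← integral_add_left_eq_self (μ := volume) (fun ξ => (u ξ - u x) * w (ξ - x)) x]
  simp only [add_sub_cancel_left]
  have h1 : Integrable (fun z => (u (x + z) - u x) * w z) := by
    simp only [sub_mul]
    exact (cs_int_mul u x w hw).sub (hw.const_mul _)
  have h2 : Integrable (fun z => (u (x - z) - u x) * w z) := by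
    have := h1.comp_neg
    simpa [he, sub_eq_add_neg] using this
  have h3 : ∫ z, (u (x - z) - u x) * w z = ∫ z, (u (x + z) - u x) * w z := by
    rw [← integral_neg_eq_self (fun z => (u (x + z) - u x) * w z)]
    simp [he, sub_eq_add_neg]
  have h4 : ∫ z, csD u x z * w z =
      ∫ z, (1/2 : ℝ) * ((u (x + z) - u x) * w z + (u (x - z) - u x) * w z) := by
    congr 1; ext z; unfold csD; ring
  rw [h4, integral_const_mul, integral_add h1 h2, h3]; ring

lemma cs_tendsto {n : ℕ} (hn : 1 ≤ n) {s : ℝ} (hs : s ∈ Set.Ioo (0:ℝ) 1)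
    (u : SchwartzMap (EuclideanSpace ℝ (Fin n)) ℝ)
    (x : EuclideanSpace ℝ (Fin n)) (w : ℝ → EuclideanSpace ℝ (Fin n) → ℝ)
    (hw : ∀ t, 0 < t → Integrable (w t)) (he : ∀ t z, w t (-z) = w t z)
    (hb : ∀ t, 0 < t → ∀ z, z ≠ 0 → |w t z| ≤ ‖z‖ ^ (-((n : ℝ) + 2 * s)))
    (hl : ∀ z, z ≠ 0 → Tendsto (fun t => w t z) (𝓝[>] (0:ℝ))
      (𝓝 (‖z‖ ^ (-((n : ℝ) + 2 * s))))) :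
    Tendsto (fun t => ∫ ξ, (u ξ - u x) * w t (ξ - x)) (𝓝[>] (0:ℝ))
      (𝓝 (∫ z, csD u x z * ‖z‖ ^ (-((n : ℝ) + 2 * s)))) := by
  have : Nonempty (Fin n) := ⟨⟨0, hn⟩⟩
  have : Nontrivial (EuclideanSpace ℝ (Fin n)) := inferInstance
  have hpos : ∀ᶠ t : ℝ in 𝓝[>] (0:ℝ), 0 < t := self_mem_nhdsWithin
  have hne : ∀ᵐ z : EuclideanSpace ℝ (Fin n), z ≠ 0 := by
    simp [ae_iff]
  obtain ⟨C, hC, hD⟩ := csD_bound u x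
  have : Tendsto (fun t => ∫ z, csD u x z * w t z) (𝓝[>] (0:ℝ))
      (𝓝 (∫ z, csD u x z * ‖z‖ ^ (-((n : ℝ) + 2 * s)))) := by
    refine tendsto_integral_filter_of_dominated_convergence
      (fun z => C * (min 1 (‖z‖ ^ 2) * ‖z‖ ^ (-((n : ℝ) + 2 * s)))) ?_ ?_
      ((cs_weight_integrable hn hs).const_mul C) ?_
    · filter_upwards [hpos] with t ht
      exact (cs_continuous_D u x).aestronglyMeasurable.mul (hw t ht).aestronglyMeasurable
    · filter_upwards [hpos] with t ht
      filter_upwards [hne] with z hz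
      rw [Real.norm_eq_abs, abs_mul, ← mul_assoc]
      exact mul_le_mul (hD z) (hb t ht z hz) (abs_nonneg _) (by positivity)
    · filter_upwards [hne] with z hz
      exact (hl z hz).const_mul _
  refine this.congr' ?_
  filter_upwards [hpos] with t ht
  exact (cs_symm u x (w t) (hw t ht) (he t)).symm

/-- Poisson weight -/
noncomputable def csW (p y : ℝ) {n : ℕ} (z : EuclideanSpace ℝ (Fin n)) : ℝ :=
  (‖z‖ ^ 2 + y ^ 2) ^ (-(p / 2))

lemma csW_smul {n : ℕ} (p : ℝ) {y : ℝ} (hy : 0 < y) (z : EuclideanSpace ℝ (Fin n)) :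
    csW p y z = y ^ (-p) * (1 + ‖y⁻¹ • z‖ ^ 2) ^ (-(p / 2)) := by
  unfold csW
  have h1 : ‖z‖ ^ 2 + y ^ 2 = y ^ 2 * (1 + ‖y⁻¹ • z‖ ^ 2) := by
    rw [norm_smul, Real.norm_of_nonneg (by positivity)]
    field_simp
    ring
  rw [h1, Real.mul_rpow (by positivity) (by positivity), ← Real.rpow_natCast y 2,
    ← Real.rpow_mul hy.le]
  congr 2; push_cast; ring

lemma cs_base_int {n : ℕ} {p : ℝ} (hp : (n:ℝ) < p) :
    Integrable (fun z : EuclideanSpace ℝ (Fin n) => (1 + ‖z‖ ^ 2) ^ (-(p / 2))) := by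
  have := integrable_rpow_neg_one_add_norm_sq (E := EuclideanSpace ℝ (Fin n)) (μ := volume)
    (r := p) (by simpa using hp)
  simpa [neg_div] using this

lemma csW_int {n : ℕ} {p : ℝ} (hp : (n:ℝ) < p) {y : ℝ} (hy : 0 < y) :
    Integrable (fun z : EuclideanSpace ℝ (Fin n) => csW p y z) := by
  simp only [csW_smul p hy]
  exact ((cs_base_int hp).comp_smul (inv_ne_zero hy.ne')).const_mul _

lemma csW_integral {n : ℕ} (p : ℝ) {y : ℝ} (hy : 0 < y) :
    ∫ z : EuclideanSpace ℝ (Fin n), csW p y z =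
      y ^ ((n:ℝ) - p) * ∫ z : EuclideanSpace ℝ (Fin n), (1 + ‖z‖ ^ 2) ^ (-(p / 2)) := by
  simp only [csW_smul p hy]
  rw [integral_const_mul, Measure.integral_comp_smul (μ := volume)
    (fun z : EuclideanSpace ℝ (Fin n) => (1 + ‖z‖ ^ 2) ^ (-(p / 2))), finrank_euclideanSpace_fin,
    smul_eq_mul, ← mul_assoc]
  congr 1
  rw [abs_of_pos (by positivity), inv_pow, inv_inv, ← Real.rpow_natCast y n, ← Real.rpow_add hy]
  congr 1; ring

lemma cs_base_pos {n : ℕ} {p : ℝ} (hp : (n:ℝ) < p) :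
    0 < ∫ z : EuclideanSpace ℝ (Fin n), (1 + ‖z‖ ^ 2) ^ (-(p / 2)) := by
  refine integral_pos_of_integrable_nonneg_nonzero (x := 0) ?_ (cs_base_int hp) ?_ ?_
  · refine Continuous.rpow_const (by fun_prop) (fun z => Or.inl (by positivity))
  · intro z; simp only [Pi.zero_apply]; positivity
  · simp

lemma cs_trunc_int {n : ℕ} (hn : 1 ≤ n) {s : ℝ} (hs : s ∈ Set.Ioo (0:ℝ) 1) {ε : ℝ}
    (hε : 0 < ε) : Integrable ({z : EuclideanSpace ℝ (Fin n) | ε < ‖z‖}.indicator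
      (fun z => ‖z‖ ^ (-((n : ℝ) + 2 * s)))) := by
  have hm : MeasurableSet {z : EuclideanSpace ℝ (Fin n) | ε < ‖z‖} :=
    measurableSet_lt measurable_const measurable_norm
  refine ((cs_weight_integrable hn hs).const_mul (1 + (ε ^ 2)⁻¹)).mono' ?_ ?_
  · refine Measurable.aestronglyMeasurable (Measurable.indicator ?_ hm)
    exact measurable_norm.pow_const _
  · refine Eventually.of_forall fun z => ?_
    have hk : 0 ≤ ‖z‖ ^ (-((n : ℝ) + 2 * s)) := by positivity
    by_cases hz : ε < ‖z‖
    · rw [indicator_of_mem (by exact hz), Real.norm_of_nonneg hk, ← mul_assoc]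
      refine le_mul_of_one_le_left hk ?_
      rcases le_total 1 (‖z‖ ^ 2) with h1 | h1
      · rw [min_eq_left h1]
        have : 0 ≤ (ε ^ 2)⁻¹ := by positivity
        linarith
      · rw [min_eq_right h1]
        have h2 : (ε ^ 2)⁻¹ * ε ^ 2 = 1 := by field_simp
        have h3 : ε ^ 2 ≤ ‖z‖ ^ 2 := by gcongr
        have h4 : (ε ^ 2)⁻¹ * ε ^ 2 ≤ (ε ^ 2)⁻¹ * ‖z‖ ^ 2 := by gcongr
        nlinarith [sq_nonneg ‖z‖]
    · rw [indicator_of_notMem (by exact hz), norm_zero]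
      positivity

end Helpers

/-- For a Schwartz function `u`, the normal-derivative trace of its
Caffarelli–Silvestre extension
`v(x,y) = ∫ P(x−ξ,y) u(ξ) dξ`, with `P(x,y) = B_{n,s} y^{2s}/(|x|²+y²)^{(n+2s)/2}`,
recovers `B_{n,s}` times the principal-value fractional Laplacian:
`lim_{y→0⁺} (v(x,y) − u(x))/y^{2s} = B_{n,s} · P.V.∫ (u(ξ) − u(x))/|x−ξ|^{n+2s} dξ`,
and in particular the principal value limit on the right exists. -/
theorem caffarelliSilvestre_trace
    (n : ℕ) (hn : 1 ≤ n) (s : ℝ) (hs : s ∈ Set.Ioo (0:ℝ) 1)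
    (u : SchwartzMap (EuclideanSpace ℝ (Fin n)) ℝ) (x : EuclideanSpace ℝ (Fin n)) :
    ∃ L : ℝ,
      Filter.Tendsto
        (fun ε : ℝ => ∫ ξ in {ξ : EuclideanSpace ℝ (Fin n) | ε < ‖ξ - x‖},
          (u ξ - u x) / ‖x - ξ‖ ^ ((n : ℝ) + 2 * s))
        (𝓝[>] (0:ℝ)) (𝓝 L) ∧
      Filter.Tendsto
        (fun y : ℝ =>
          ((∫ ξ : EuclideanSpace ℝ (Fin n),
              (poissonB n s * y ^ (2 * s) /
                (‖x - ξ‖ ^ 2 + y ^ 2) ^ (((n : ℝ) + 2 * s) / 2)) * u ξ) - u x) / y ^ (2 * s))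
        (𝓝[>] (0:ℝ)) (𝓝 (poissonB n s * L)) := by
  have hp : (n:ℝ) < (n:ℝ) + 2 * s := by linarith [hs.1]
  refine ⟨∫ z, csD u x z * ‖z‖ ^ (-((n : ℝ) + 2 * s)), ?_, ?_⟩
  · have := cs_tendsto hn hs u x (fun ε => {z : EuclideanSpace ℝ (Fin n) | ε < ‖z‖}.indicator
      (fun z => ‖z‖ ^ (-((n : ℝ) + 2 * s)))) (fun t ht => cs_trunc_int hn hs ht)
      (fun t z => by simp [indicator]) ?_ ?_
    · refine this.congr fun ε => ?_
      have hms : MeasurableSet {ξ : EuclideanSpace ℝ (Fin n) | ε < ‖ξ - x‖} :=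
        measurableSet_lt measurable_const ((measurable_id.sub_const x).norm)
      rw [← integral_indicator hms]
      congr 1
      ext ξ
      by_cases h : ε < ‖ξ - x‖
      · rw [indicator_of_mem (by exact h), indicator_of_mem (by exact h), norm_sub_rev x ξ,
          Real.rpow_neg (norm_nonneg _), div_eq_mul_inv]
      · rw [indicator_of_notMem (by exact h), indicator_of_notMem (by exact h), mul_zero]
    · intro t ht z hz
      have hk : 0 ≤ ‖z‖ ^ (-((n : ℝ) + 2 * s)) := by positivity
      by_cases h : t < ‖z‖
      · rw [indicator_of_mem (by exact h), abs_of_nonneg hk]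
      · rw [indicator_of_notMem (by exact h), abs_zero]; exact hk
    · intro z hz
      refine tendsto_const_nhds.congr' ?_
      have : ∀ᶠ t : ℝ in 𝓝[>] (0:ℝ), t < ‖z‖ :=
        nhdsWithin_le_nhds (eventually_lt_nhds (norm_pos_iff.2 hz))
      filter_upwards [this] with t ht
      rw [indicator_of_mem (by exact ht)]
  · have := cs_tendsto hn hs u x (fun y => csW ((n : ℝ) + 2 * s) y)
      (fun t ht => csW_int hp ht) (fun t z => by simp [csW]) ?_ ?_
    · refine (this.const_mul (poissonB n s)).congr' ?_
      filter_upwards [self_mem_nhdsWithin] with y hy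
      have hy : 0 < y := hy
      have hI := cs_base_pos (n := n) hp
      have hWi := csW_int (n := n) hp hy
      have e0 : ∫ ξ, (poissonB n s * y ^ (2 * s) /
                (‖x - ξ‖ ^ 2 + y ^ 2) ^ (((n : ℝ) + 2 * s) / 2)) * u ξ =
          poissonB n s * y ^ (2 * s) * ∫ ξ, u ξ * csW ((n : ℝ) + 2 * s) y (ξ - x) := by
        rw [← integral_const_mul]
        congr 1; ext ξ
        unfold csW
        rw [norm_sub_rev ξ x, Real.rpow_neg (by positivity)]
        ring
      have hWx : Integrable (fun ξ => csW ((n : ℝ) + 2 * s) y (ξ - x)) := hWi.comp_sub_right x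
      have hUx : Integrable (fun ξ => u ξ * csW ((n : ℝ) + 2 * s) y (ξ - x)) := by
        have := (cs_int_mul u x _ hWi).comp_sub_right x
        simpa using this
      have e1 : ∫ ξ, (u ξ - u x) * csW ((n : ℝ) + 2 * s) y (ξ - x) =
          (∫ ξ, u ξ * csW ((n : ℝ) + 2 * s) y (ξ - x)) -
            u x * ∫ ξ : EuclideanSpace ℝ (Fin n), csW ((n : ℝ) + 2 * s) y ξ := by
        simp only [sub_mul]
        rw [integral_sub hUx (hWx.const_mul _), integral_const_mul,
          integral_sub_right_eq_self (fun ξ => csW ((n : ℝ) + 2 * s) y ξ) x]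
      have e2 : y ^ ((n:ℝ) - ((n:ℝ) + 2 * s)) = (y ^ (2 * s))⁻¹ := by
        rw [← Real.rpow_neg hy.le]; congr 1; ring
      have hys : 0 < y ^ (2 * s) := by positivity
      rw [e0, e1, csW_integral _ hy, e2, poissonB]
      field_simp
    · intro t ht z hz
      have hz' : 0 < ‖z‖ := norm_pos_iff.2 hz
      have h0 : ‖z‖ ^ (-((n : ℝ) + 2 * s)) = (‖z‖ ^ 2) ^ (-(((n : ℝ) + 2 * s) / 2)) := by
        rw [← Real.rpow_natCast ‖z‖ 2, ← Real.rpow_mul hz'.le]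
        congr 1; push_cast; ring
      unfold csW
      rw [abs_of_nonneg (by positivity), h0]
      refine Real.rpow_le_rpow_of_nonpos (by positivity) (by nlinarith [sq_nonneg t]) ?_
      have := hs.1
      have : (0:ℝ) ≤ n := by positivity
      linarith
    · intro z hz
      have hz' : 0 < ‖z‖ := norm_pos_iff.2 hz
      have h0 : ‖z‖ ^ (-((n : ℝ) + 2 * s)) =
          (‖z‖ ^ 2 + (0:ℝ) ^ 2) ^ (-(((n : ℝ) + 2 * s) / 2)) := by
        rw [zero_pow two_ne_zero, add_zero, ← Real.rpow_natCast ‖z‖ 2, ← Real.rpow_mul hz'.le]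
        congr 1; push_cast; ring
      rw [h0]
      have hc : ContinuousAt (fun t : ℝ => (‖z‖ ^ 2 + t ^ 2) ^ (-(((n : ℝ) + 2 * s) / 2))) 0 := by
        refine ContinuousAt.rpow_const (by fun_prop) (Or.inl (by positivity))
      exact hc.tendsto.mono_left nhdsWithin_le_nhds
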